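/- Let G be a finitely generated group, with finite symmetric generating set S and word length |·|, which is one-ended and admits a controlled Følner sequence. Let π: G → O(H) be an ergodic orthogonal representation on a real Hilbert space H and let b: G → H be a 1-cocycle for π such that for every ξ ∈ H the function g ↦ (1/|g|)·⟨b(g), ξ⟩ belongs to H¹(G). Then b is almost inner, i.e., the affine isometric action T_g(ξ) = π_g(ξ) + b(g) admits a sequence of almost fixed points. -/

import Mathlib

/-!
Write `T_g ξ = π_g ξ + b g`, so that `T_g (b h) = b (g h)`.

*Weak sublinearity.* A bounded function with summable gradient on a one-ended group converges at
infinity: by Borel-Cantelli almost every level `t` is crossed by only finitely many edges, so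
outside a large ball `f - t` has constant sign on the unique infinite component, whose complement
is finite (`MemH1.exists_tendsto`). Applied to `g ↦ ⟪b g, ξ⟫ / |g|` for all `ξ`, this yields a weak
limit `η` of `b g / |g|`. The cocycle identity and `|g h| / |h| → 1` make `η` invariant, so `η = 0`
by ergodicity (`tendsto_inner_div_wordLength`).

*Averaging.* For the average `x_n` of `b` over the Følner set `F_n`, the vector `T_s x_n - x_n` is
`1 / |F_n|` times a signed sum of values of `b` over part of `∂F_n`. Elements of `∂F_n` have length
at most `diam F_n + 1` and `|∂F_n| diam F_n ≤ K |F_n|`, so weak sublinearity of `b` gives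
`T_s x_n - x_n → 0` weakly (`tendsto_inner_displacement`).

*Weak to strong.* The tuples `(T_s ξ - ξ)_{s ∈ S}` form a convex set in `H^S`, so by Hahn-Banach
`0` lies in its norm closure (`exists_norm_tendsto_of_weak`). The resulting sequence is almost
fixed by `S`, hence by all of `G`.
-/


open Filter Topology
open scoped RealInnerProductSpace

noncomputable section

/-- The word length of `g` with respect to a generating set `S`
(`sInf` of lengths of words in `S` representing `g`). -/
def wordLength {G : Type*} [Group G] (S : Finset G) (g : G) : ℕ :=
  sInf {n | ∃ l : List G, l.length = n ∧ (∀ x ∈ l, x ∈ S) ∧ l.prod = g}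

/-- `S` is a finite symmetric generating set. -/
def IsSymmGen {G : Type*} [Group G] (S : Finset G) : Prop :=
  (∀ s ∈ S, s⁻¹ ∈ S) ∧ Subgroup.closure (S : Set G) = ⊤

/-- A Reiter sequence: probability measures `μ n` on `G` with `‖μ n - g ∗ μ n‖₁ → 0`
for every `g ∈ G`. -/
def IsReiterSeq {G : Type*} [Group G] (μ : ℕ → G → ℝ) : Prop :=
  (∀ n g, 0 ≤ μ n g) ∧ (∀ n, Summable (μ n)) ∧ (∀ n, ∑' g, μ n g = 1) ∧
    ∀ g : G, Tendsto (fun n => ∑' h, |μ n h - μ n (g⁻¹ * h)|) atTop (𝓝 0)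

/-- A 1-cocycle for the orthogonal representation `π`. -/
def IsCocycle {G H : Type*} [Group G] [NormedAddCommGroup H] [InnerProductSpace ℝ H]
    (π : G →* (H ≃ₗᵢ[ℝ] H)) (b : G → H) : Prop :=
  ∀ g h : G, b (g * h) = π g (b h) + b g

/-- An orthogonal representation is ergodic if its only invariant vector is `0`. -/
def IsErgodicRep {G H : Type*} [Group G] [NormedAddCommGroup H] [InnerProductSpace ℝ H]
    (π : G →* (H ≃ₗᵢ[ℝ] H)) : Prop :=
  ∀ ξ : H, (∀ g : G, π g ξ = ξ) → ξ = 0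

/-- The euclidean norm of the variation `δf(g) ∈ ℝ^S`, `δf(g)(s) = f(g) - f(gs)`. -/
def delNorm {G : Type*} [Group G] (S : Finset G) (f : G → ℝ) (g : G) : ℝ :=
  Real.sqrt (∑ s ∈ S, (f g - f (g * s)) ^ 2)

/-- A bounded function `f : G → ℝ` is higson if `g ↦ ‖δf(g)‖` tends to `0` as `g` leaves
finite subsets of `G`. -/
def IsHigson {G : Type*} [Group G] (S : Finset G) (f : G → ℝ) : Prop :=
  (∃ M : ℝ, ∀ g, |f g| ≤ M) ∧ Tendsto (delNorm S f) cofinite (𝓝 0)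

/-- `f ∈ H¹(G)`: `f` is a higson function (bounded with `‖δf‖ ∈ C₀(G)`) and
`∑ g, ‖δf(g)‖ < ∞`. -/
def MemH1 {G : Type*} [Group G] (S : Finset G) (f : G → ℝ) : Prop :=
  (∃ M : ℝ, ∀ g, |f g| ≤ M) ∧ Tendsto (delNorm S f) cofinite (𝓝 0) ∧
    Summable (delNorm S f)

/-- The Cayley graph of `(G, S)`: `g` and `h` are adjacent iff `g ≠ h` and they differ by a
generator (for symmetric `S` this is `g⁻¹ h ∈ S`). -/
def cayleyGraph {G : Type*} [Group G] (S : Finset G) : SimpleGraph G :=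
  SimpleGraph.fromRel fun g h => g⁻¹ * h ∈ S

/-- `(G, S)` is one-ended: for every `r`, the subgraph of the Cayley graph induced on the
complement of the ball `B(r)` has exactly one infinite connected component. -/
def OneEnded {G : Type*} [Group G] (S : Finset G) : Prop :=
  ∀ r : ℕ,
    ∃! c : ((cayleyGraph S).induce {g : G | r < wordLength S g}).ConnectedComponent,
      c.supp.Infinite

/-- The boundary `∂F = ⋃ s ∈ S, (sF Δ F)` of a finite subset `F`. -/
def finsetBoundary {G : Type*} [Group G] [DecidableEq G] (S : Finset G) (F : Finset G) :
    Finset G :=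
  S.biUnion fun s =>
    ((F.image fun g => s * g) \ F) ∪ (F \ (F.image fun g => s * g))

/-- `diam F`: the least `m` such that `F ⊆ B(m)`. -/
def finsetDiam {G : Type*} [Group G] (S : Finset G) (F : Finset G) : ℕ :=
  sInf {m | ∀ g ∈ F, wordLength S g ≤ m}

/-- A `K`-controlled Følner sequence: a Følner sequence `(F n)` of nonempty finite subsets
with `|∂F n| / |F n| ≤ K / diam (F n)` for all `n`. -/
def IsControlledFolnerSeq {G : Type*} [Group G] [DecidableEq G] (S : Finset G) (K : ℝ)
    (F : ℕ → Finset G) : Prop :=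
  (∀ n, (F n).Nonempty) ∧
  (∀ g : G, Tendsto
    (fun n => (((((F n).image fun h => g * h) \ F n) ∪
      (F n \ ((F n).image fun h => g * h))).card : ℝ) / (F n).card) atTop (𝓝 0)) ∧
  (∀ n, ((finsetBoundary S (F n)).card : ℝ) / (F n).card ≤ K / finsetDiam S (F n))

/-- The uniform probability measure on a finite subset `F ⊆ G`. -/
def unifMeasure {G : Type*} [Group G] [DecidableEq G] (F : Finset G) (g : G) : ℝ :=
  if g ∈ F then (F.card : ℝ)⁻¹ else 0

/-! ### Word length -/

lemma exists_word {G : Type*} [Group G] {S : Finset G} (hS : IsSymmGen S) (g : G) :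
    ∃ l : List G, l.length = wordLength S g ∧ (∀ x ∈ l, x ∈ S) ∧ l.prod = g := by
  have hne : {n | ∃ l : List G, l.length = n ∧ (∀ x ∈ l, x ∈ S) ∧ l.prod = g}.Nonempty := by
    have hg : g ∈ Subgroup.closure (S : Set G) := by rw [hS.2]; trivial
    induction hg using Subgroup.closure_induction with
    | mem x hx => exact ⟨1, [x], rfl, by simpa using hx, by simp⟩
    | one => exact ⟨0, [], rfl, by simp, rfl⟩
    | mul x y _ _ hx hy =>
      obtain ⟨_, l, -, hl, rfl⟩ := hx
      obtain ⟨_, l', -, hl', rfl⟩ := hy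
      refine ⟨_, l ++ l', rfl, ?_, by simp⟩
      intro z hz
      rcases List.mem_append.1 hz with h | h
      exacts [hl z h, hl' z h]
    | inv x _ hx =>
      obtain ⟨_, l, -, hl, rfl⟩ := hx
      refine ⟨_, (l.map (·⁻¹)).reverse, rfl, ?_, by rw [List.prod_inv_reverse]⟩
      intro z hz
      obtain ⟨y, hy, rfl⟩ := List.mem_map.1 (List.mem_reverse.1 hz)
      exact hS.1 y (hl y hy)
  exact Nat.sInf_mem hne

lemma wordLength_prod_le {G : Type*} [Group G] {S : Finset G} (l : List G)
    (hl : ∀ x ∈ l, x ∈ S) : wordLength S l.prod ≤ l.length :=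
  Nat.sInf_le ⟨l, rfl, hl, rfl⟩

lemma wordLength_mul_le {G : Type*} [Group G] {S : Finset G} (hS : IsSymmGen S) (g h : G) :
    wordLength S (g * h) ≤ wordLength S g + wordLength S h := by
  obtain ⟨l, h1, h2, h3⟩ := exists_word hS g
  obtain ⟨l', h1', h2', h3'⟩ := exists_word hS h
  have := wordLength_prod_le (l ++ l') (S := S) (by
    intro z hz
    rcases List.mem_append.1 hz with h | h
    exacts [h2 z h, h2' z h])
  rwa [List.prod_append, h3, h3', List.length_append, h1, h1'] at this

lemma wordLength_generator_le {G : Type*} [Group G] {S : Finset G} {s : G} (hs : s ∈ S) :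
    wordLength S s ≤ 1 := by
  simpa using wordLength_prod_le (S := S) [s] (by simpa using hs)

/-- Removing the last letter of a shortest word. -/
lemma exists_shorter {G : Type*} [Group G] {S : Finset G} (hS : IsSymmGen S) {g : G} {n : ℕ}
    (hg : wordLength S g = n + 1) : ∃ s ∈ S, ∃ h, g = h * s ∧ wordLength S h = n := by
  obtain ⟨l, h1, h2, h3⟩ := exists_word hS g
  rcases List.eq_nil_or_concat l with rfl | ⟨l', s, rfl⟩
  · simp at h1; omega
  have hs : s ∈ S := h2 s (by simp)
  refine ⟨s, hs, l'.prod, by simpa using h3.symm, ?_⟩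
  have hle := wordLength_prod_le (S := S) l' (fun x hx => h2 x (by simp [hx]))
  have hge := wordLength_mul_le hS l'.prod s
  have h1s := wordLength_generator_le hs
  have : l'.prod * s = g := by simpa using h3
  rw [this] at hge
  simp at h1
  omega

lemma finite_ball {G : Type*} [Group G] {S : Finset G} (hS : IsSymmGen S) (n : ℕ) :
    {g : G | wordLength S g ≤ n}.Finite := by
  induction n with
  | zero =>
    refine (Set.finite_singleton (1 : G)).subset fun g hg => ?_
    obtain ⟨l, h1, -, h3⟩ := exists_word hS g
    have : l = [] := List.length_eq_zero_iff.1 (h1.trans (Nat.le_zero.1 hg))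
    subst this
    simpa using h3.symm
  | succ n ih =>
    refine (ih.union (Set.Finite.image2 (fun h s => h * s) ih S.finite_toSet)).subset
      fun g hg => ?_
    rcases Nat.lt_or_ge (wordLength S g) (n + 1) with h | h
    · exact Or.inl (Nat.lt_succ_iff.1 h)
    · obtain ⟨s, hs, h', rfl, hh⟩ := exists_shorter hS (le_antisymm hg h)
      exact Or.inr ⟨h', hh.le, s, hs, rfl⟩

lemma tendsto_wordLength {G : Type*} [Group G] {S : Finset G} (hS : IsSymmGen S) :
    Tendsto (fun g : G => (wordLength S g : ℝ)) cofinite atTop := by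
  refine tendsto_natCast_atTop_atTop.comp (tendsto_atTop.2 fun n => ?_)
  refine (finite_ball hS n).subset fun g hg => ?_
  simp only [Set.mem_compl_iff, Set.mem_ofPred_eq, not_le] at hg ⊢
  exact hg.le

lemma tendsto_wordLength_mul_div {G : Type*} [Group G] {S : Finset G} (hS : IsSymmGen S)
    (g : G) :
    Tendsto (fun h : G => (wordLength S (g * h) : ℝ) / wordLength S h) cofinite (𝓝 1) := by
  have hinv : Tendsto (fun h : G => (wordLength S h : ℝ)⁻¹) cofinite (𝓝 0) :=
    tendsto_inv_atTop_zero.comp (tendsto_wordLength hS)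
  have hlow : Tendsto (fun h : G => 1 - (wordLength S g⁻¹ : ℝ) * (wordLength S h : ℝ)⁻¹)
      cofinite (𝓝 1) := by simpa using (hinv.const_mul (wordLength S g⁻¹ : ℝ)).const_sub 1
  have hup : Tendsto (fun h : G => 1 + (wordLength S g : ℝ) * (wordLength S h : ℝ)⁻¹)
      cofinite (𝓝 1) := by simpa using (hinv.const_mul (wordLength S g : ℝ)).const_add 1
  have hpos := (tendsto_wordLength hS).eventually_gt_atTop 0
  refine tendsto_of_tendsto_of_tendsto_of_le_of_le' hlow hup ?_ ?_
  · filter_upwards [hpos] with h hh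
    have : (wordLength S h : ℝ) ≤ wordLength S g⁻¹ + wordLength S (g * h) := by
      have := wordLength_mul_le hS g⁻¹ (g * h)
      rw [inv_mul_cancel_left] at this
      exact_mod_cast this
    rw [le_div_iff₀ hh, sub_mul, mul_assoc, inv_mul_cancel₀ hh.ne']
    linarith
  · filter_upwards [hpos] with h hh
    have : (wordLength S (g * h) : ℝ) ≤ wordLength S g + wordLength S h := by
      exact_mod_cast wordLength_mul_le hS g h
    rw [div_le_iff₀ hh, add_mul, mul_assoc, inv_mul_cancel₀ hh.ne']
    linarith

/-! ### Functions with summable gradient on a one-ended group -/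

lemma abs_sub_le_delNorm {G : Type*} [Group G] {S : Finset G} (f : G → ℝ) (g : G) {s : G}
    (hs : s ∈ S) : |f g - f (g * s)| ≤ delNorm S f g :=
  Real.abs_le_sqrt (Finset.single_le_sum (f := fun s => (f g - f (g * s)) ^ 2)
    (fun _ _ => sq_nonneg _) hs)

/-- Along a shortest word, every vertex outside `B(r)` is connected, inside the complement of
`B(r)`, to the sphere of radius `r + 1`; hence there are finitely many components. -/
lemma finite_components {G : Type*} [Group G] {S : Finset G} (hS : IsSymmGen S) (r : ℕ) :
    Finite ((cayleyGraph S).induce {g : G | r < wordLength S g}).ConnectedComponent := by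
  set X := {g : G | r < wordLength S g} with hX
  set Γ := (cayleyGraph S).induce X with hΓ
  have key : ∀ k : ℕ, ∀ x : X, wordLength S (x : G) = r + 1 + k →
      ∃ y : X, wordLength S (y : G) = r + 1 ∧ Γ.Reachable y x := by
    intro k
    induction k with
    | zero => exact fun x hx => ⟨x, hx, SimpleGraph.Reachable.refl _⟩
    | succ k ih =>
      intro x hx
      obtain ⟨s, hs, h, hxh, hh⟩ := exists_shorter hS (n := r + 1 + k) hx
      have hhX : h ∈ X := by simp only [hX, Set.mem_ofPred_eq]; omega
      obtain ⟨y, hy, hyr⟩ := ih ⟨h, hhX⟩ hh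
      refine ⟨y, hy, hyr.trans (SimpleGraph.Adj.reachable ?_)⟩
      simp only [hΓ, SimpleGraph.comap_adj, cayleyGraph, SimpleGraph.fromRel_adj,
        Function.Embedding.subtype_apply]
      refine ⟨?_, Or.inl (by rw [hxh]; simpa using hs)⟩
      intro heq
      rw [heq] at hh
      omega
  have hfin : Finite {y : X | wordLength S (y : G) ≤ r + 1} :=
    ((finite_ball hS (r + 1)).preimage Subtype.val_injective.injOn).to_subtype
  refine Finite.of_surjective
    (fun y : {y : X | wordLength S (y : G) ≤ r + 1} => Γ.connectedComponentMk y.1) ?_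
  intro c
  induction c using SimpleGraph.ConnectedComponent.ind with
  | h x =>
    have hx : r < wordLength S (x : G) := x.2
    obtain ⟨y, hy, hyr⟩ := key (wordLength S (x : G) - (r + 1)) x (by omega)
    exact ⟨⟨y, hy.le⟩, SimpleGraph.ConnectedComponent.sound hyr⟩

/-- Two infinite subsets of a one-ended group can be joined outside of any ball. -/
lemma exists_reachable_of_infinite {G : Type*} [Group G] {S : Finset G} (hS : IsSymmGen S)
    (hone : OneEnded S) (r : ℕ) {A B : Set G} (hA : A.Infinite) (hB : B.Infinite) :
    ∃ x y : {g : G | r < wordLength S g}, (x : G) ∈ A ∧ (y : G) ∈ B ∧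
      ((cayleyGraph S).induce {g : G | r < wordLength S g}).Reachable x y := by
  have hfin := finite_components hS r
  set X := {g : G | r < wordLength S g} with hX
  set Γ := (cayleyGraph S).induce X with hΓ
  have key : ∀ A : Set G, A.Infinite → ∃ c : Γ.ConnectedComponent, c.supp.Infinite ∧
      ∃ x : X, (x : G) ∈ A ∧ Γ.connectedComponentMk x = c := by
    intro A hA
    have hA' : (Subtype.val ⁻¹' A : Set X).Infinite := by
      intro hf
      refine hA (((hf.image Subtype.val).union (finite_ball hS r)).subset fun g hg => ?_)
      rcases Nat.lt_or_ge r (wordLength S g) with h | h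
      · exact Or.inl ⟨⟨g, h⟩, hg, rfl⟩
      · exact Or.inr h
    have := hA'.to_subtype
    obtain ⟨c, hc⟩ := Finite.exists_infinite_fiber
      (fun x : (Subtype.val ⁻¹' A : Set X) => Γ.connectedComponentMk x.1)
    refine ⟨c, ?_, ?_⟩
    · have h2 : ((Subtype.val '' ((fun x : (Subtype.val ⁻¹' A : Set X) =>
          Γ.connectedComponentMk x.1) ⁻¹' {c})) : Set X).Infinite :=
        (Set.infinite_coe_iff.1 hc).image Subtype.val_injective.injOn
      refine h2.mono ?_
      rintro _ ⟨x, hx, rfl⟩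
      exact hx
    · obtain ⟨⟨x, hx⟩⟩ := hc.nonempty
      exact ⟨x.1, x.2, hx⟩
  obtain ⟨c, hc, x, hx, hxc⟩ := key A hA
  obtain ⟨d, hd, y, hy, hyd⟩ := key B hB
  have hcd : c = d := (hone r).unique hc hd
  exact ⟨x, y, hx, hy, SimpleGraph.ConnectedComponent.exact (hxc.trans (hcd.trans hyd.symm))⟩

/-- Coarea-type argument: since the gradient is summable, almost every level `t` is crossed by
only finitely many edges (Borel-Cantelli applied to the intervals of radius `delNorm S f g`
around `f g`). -/
lemma exists_level {G : Type*} [Group G] [Countable G] {S : Finset G} {f : G → ℝ}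
    (hf : Summable (delNorm S f)) {a b : ℝ} (hab : a < b) :
    ∃ t, a < t ∧ t < b ∧ {g | |f g - t| ≤ delNorm S f g}.Finite := by
  have hD : ∀ g, 0 ≤ delNorm S f g := fun g => Real.sqrt_nonneg _
  have hsum : ∑' g, MeasureTheory.volume (Metric.closedBall (f g) (delNorm S f g)) ≠ ⊤ := by
    simp only [Real.volume_closedBall]
    rw [← ENNReal.ofReal_tsum_of_nonneg (fun g => by have := hD g; positivity)
      (hf.mul_left 2)]
    exact ENNReal.ofReal_ne_top
  have hae := MeasureTheory.ae_finite_setOfPred_mem hsum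
  have hpos : MeasureTheory.volume (Set.Ioo a b) ≠ 0 := by
    simp [hab]
  obtain ⟨t, ht, hfin⟩ := ((MeasureTheory.frequently_ae_mem_iff.2 hpos).and_eventually hae).exists
  refine ⟨t, ht.1, ht.2, hfin.subset fun g hg => ?_⟩
  simpa [Real.dist_eq, abs_sub_comm] using hg

/-- A bounded function with summable gradient on a one-ended group converges at infinity. -/
lemma MemH1.exists_tendsto {G : Type*} [Group G] [Countable G] {S : Finset G}
    (hS : IsSymmGen S) (hone : OneEnded S) {f : G → ℝ} (hf : MemH1 S f) :
    ∃ c, Tendsto f cofinite (𝓝 c) := by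
  obtain ⟨⟨M, hM⟩, -, hsum⟩ := hf
  refine tendsto_of_no_upcrossings dense_univ ?_
    (isBoundedUnder_of ⟨M, fun g => (abs_le.1 (hM g)).2⟩)
    (isBoundedUnder_of ⟨-M, fun g => (abs_le.1 (hM g)).1⟩)
  rintro a - b - hab ⟨hlow, hhigh⟩
  rw [frequently_cofinite_iff_infinite] at hlow hhigh
  obtain ⟨t, hat, htb, hfin⟩ := exists_level hsum hab
  obtain ⟨r, hr⟩ : ∃ r, ∀ g, r < wordLength S g → delNorm S f g < |f g - t| := by
    obtain ⟨r, hr⟩ := (hfin.image (wordLength S)).bddAbove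
    refine ⟨r, fun g hg => ?_⟩
    by_contra hle
    exact absurd (hr ⟨g, not_lt.1 hle, rfl⟩) (by omega)
  obtain ⟨x, y, hx, hy, hxy⟩ := exists_reachable_of_infinite hS hone r hlow hhigh
  -- The side of `t` on which `f` lies does not change along an edge outside `B(r)`.
  have hstep : ∀ u v : G, r < wordLength S u → u⁻¹ * v ∈ S → f u < t → f v < t := by
    intro u v hu huv hut
    have h1 := abs_sub_le_delNorm f u huv
    rw [mul_inv_cancel_left] at h1
    have h2 := hr u hu
    rw [abs_of_neg (sub_neg.2 hut)] at h2
    have := (abs_le.1 h1).1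
    linarith
  obtain ⟨w⟩ := hxy
  have hwalk : ∀ {u v : {g : G | r < wordLength S g}}
      (_ : ((cayleyGraph S).induce {g : G | r < wordLength S g}).Walk u v),
      f u < t → f v < t := by
    intro u v w
    induction w with
    | nil => exact id
    | @cons u v _ h _ ih =>
      intro hu
      refine ih (hstep u v u.2 ?_ hu)
      simp only [SimpleGraph.comap_adj, cayleyGraph, SimpleGraph.fromRel_adj,
        Function.Embedding.subtype_apply] at h
      rcases h.2 with h | h
      · exact h
      · simpa using hS.1 _ h
  have := hwalk w (lt_trans hx hat)
  have hy' : b < f y := hy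
  linarith

/-! ### The weak limit of the rescaled cocycle -/

lemma OneEnded.infinite {G : Type*} [Group G] {S : Finset G} (hone : OneEnded S) :
    Infinite G := by
  obtain ⟨c, hc, -⟩ := hone 0
  have : Infinite {g : G | 0 < wordLength S g} :=
    Set.infinite_univ_iff.1 (hc.mono (Set.subset_univ _))
  exact Infinite.of_injective (Subtype.val : {g : G | 0 < wordLength S g} → G)
    Subtype.val_injective

/-- The rescaled cocycle `b g / |g|` converges weakly to `0`: it has a weak limit because its
coefficients lie in `H¹`, this limit is `π`-invariant, and `π` is ergodic. -/
lemma tendsto_inner_div_wordLength {G H : Type*} [Group G] [Countable G]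
    {S : Finset G} (hS : IsSymmGen S) (hone : OneEnded S)
    [NormedAddCommGroup H] [InnerProductSpace ℝ H] [CompleteSpace H]
    {π : G →* (H ≃ₗᵢ[ℝ] H)} (hπ : IsErgodicRep π) {b : G → H} (hb : IsCocycle π b)
    (hH1 : ∀ ξ : H, MemH1 S fun g => (wordLength S g : ℝ)⁻¹ * ⟪b g, ξ⟫) (ξ : H) :
    Tendsto (fun g => (wordLength S g : ℝ)⁻¹ * ⟪b g, ξ⟫) cofinite (𝓝 0) := by
  have := hone.infinite
  have : (cofinite : Filter G).IsCountablyGenerated :=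
    HasCountableBasis.isCountablyGenerated ⟨hasBasis_cofinite, Set.Countable.ofPred_finite⟩
  choose c hc using fun ξ => (hH1 ξ).exists_tendsto hS hone
  -- `c` is a continuous functional by Banach-Steinhaus.
  let φ : H →L[ℝ] ℝ := continuousLinearMapOfTendsto (l := cofinite)
    (fun g : G => (wordLength S g : ℝ)⁻¹ • innerSL ℝ (b g)) (f := c)
    (tendsto_pi_nhds.2 fun ξ => by simpa using hc ξ)
  have hφ : ∀ ξ, φ ξ = c ξ := fun ξ => rfl
  set η : H := (InnerProductSpace.toDual ℝ H).symm φ with hη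
  have hηc : ∀ ξ, ⟪η, ξ⟫ = c ξ := fun ξ => by
    rw [hη, InnerProductSpace.toDual_symm_apply, hφ]
  have hinv : ∀ g, π g η = η := by
    intro g
    refine ext_inner_right ℝ fun ζ => ?_
    have h1 : ⟪π g η, ζ⟫ = ⟪η, (π g).symm ζ⟫ := by
      rw [← (π g).inner_map_map η, LinearIsometryEquiv.apply_symm_apply]
    rw [h1, hηc, hηc]
    refine tendsto_nhds_unique (hc ((π g).symm ζ)) ?_
    have hinv : Tendsto (fun h : G => (wordLength S h : ℝ)⁻¹) cofinite (𝓝 0) :=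
      tendsto_inv_atTop_zero.comp (tendsto_wordLength hS)
    have hshift : Tendsto (fun h : G => (wordLength S (g * h) : ℝ)⁻¹ * ⟪b (g * h), ζ⟫)
        cofinite (𝓝 (c ζ)) := (hc ζ).comp (mul_right_injective g).tendsto_cofinite
    have hlim := ((tendsto_wordLength_mul_div hS g).mul hshift).sub
      (hinv.mul_const ⟪b g, ζ⟫)
    rw [one_mul, zero_mul, sub_zero] at hlim
    refine hlim.congr' ?_
    have hpos := (mul_right_injective g).tendsto_cofinite.eventually
      ((tendsto_wordLength hS).eventually_gt_atTop 0)
    filter_upwards [hpos] with h hh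
    have h2 : ⟪b h, (π g).symm ζ⟫ = ⟪π g (b h), ζ⟫ := by
      rw [← (π g).inner_map_map (b h), LinearIsometryEquiv.apply_symm_apply]
    rw [h2, hb g h, inner_add_left]
    have hh' : (wordLength S (g * h) : ℝ) ≠ 0 := hh.ne'
    field_simp
    ring
  have hη0 : η = 0 := hπ η hinv
  have : c ξ = 0 := by rw [← hηc, hη0, inner_zero_left]
  exact this ▸ hc ξ

/-! ### Følner averages of the cocycle -/

/-- The displacement of the average of `b` over `F` under `T_s` is a boundary term. -/
lemma abs_inner_displacement_le {G H : Type*} [Group G] [DecidableEq G] {S : Finset G}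
    [NormedAddCommGroup H] [InnerProductSpace ℝ H]
    {π : G →* (H ≃ₗᵢ[ℝ] H)} {b : G → H} (hb : IsCocycle π b) {F : Finset G}
    (hF : F.Nonempty) {s : G} (hs : s ∈ S) (ζ : H) :
    |⟪π s ((F.card : ℝ)⁻¹ • ∑ h ∈ F, b h) + b s - (F.card : ℝ)⁻¹ • ∑ h ∈ F, b h, ζ⟫| ≤
      (∑ h ∈ finsetBoundary S F, |⟪b h, ζ⟫|) / F.card := by
  have hcard : (F.card : ℝ) ≠ 0 := by exact_mod_cast hF.card_pos.ne'
  set F' := F.image fun g => s * g with hF'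
  have hsum : ∑ h ∈ F', b h = ∑ h ∈ F, (π s (b h) + b s) := by
    rw [hF', Finset.sum_image (fun x _ y _ h => mul_left_cancel h)]
    exact Finset.sum_congr rfl fun h _ => hb s h
  have hvec : π s ((F.card : ℝ)⁻¹ • ∑ h ∈ F, b h) + b s - (F.card : ℝ)⁻¹ • ∑ h ∈ F, b h
      = (F.card : ℝ)⁻¹ • (∑ h ∈ F' \ F, b h - ∑ h ∈ F \ F', b h) := by
    rw [Finset.sum_sdiff_sub_sum_sdiff, hsum, Finset.sum_add_distrib, Finset.sum_const,
      smul_sub, smul_add, ← Nat.cast_smul_eq_nsmul ℝ, smul_smul, inv_mul_cancel₀ hcard, one_smul,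
      map_smul, map_sum]
  have hsub : (F' \ F) ∪ (F \ F') ⊆ finsetBoundary S F :=
    Finset.subset_biUnion_of_mem (fun s => ((F.image fun g => s * g) \ F) ∪
      (F \ (F.image fun g => s * g))) hs
  have hdisj : Disjoint (F' \ F) (F \ F') :=
    Finset.disjoint_left.2 fun x hx hx' =>
      (Finset.mem_sdiff.1 hx).2 (Finset.mem_sdiff.1 hx').1
  rw [hvec, inner_smul_left, inner_sub_left, sum_inner, sum_inner, abs_mul, div_eq_inv_mul]
  simp only [conj_trivial, abs_inv, Nat.abs_cast]
  gcongr
  calc |∑ h ∈ F' \ F, ⟪b h, ζ⟫ - ∑ h ∈ F \ F', ⟪b h, ζ⟫|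
      ≤ |∑ h ∈ F' \ F, ⟪b h, ζ⟫| + |∑ h ∈ F \ F', ⟪b h, ζ⟫| := abs_sub _ _
    _ ≤ ∑ h ∈ F' \ F, |⟪b h, ζ⟫| + ∑ h ∈ F \ F', |⟪b h, ζ⟫| :=
        add_le_add (Finset.abs_sum_le_sum_abs _ _) (Finset.abs_sum_le_sum_abs _ _)
    _ = ∑ h ∈ (F' \ F) ∪ (F \ F'), |⟪b h, ζ⟫| := (Finset.sum_union hdisj).symm
    _ ≤ ∑ h ∈ finsetBoundary S F, |⟪b h, ζ⟫| :=
        Finset.sum_le_sum_of_subset_of_nonneg hsub fun _ _ _ => abs_nonneg _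

lemma wordLength_le_of_mem_boundary {G : Type*} [Group G] [DecidableEq G] {S : Finset G}
    (hS : IsSymmGen S) {F : Finset G} {h : G} (hh : h ∈ finsetBoundary S F) :
    wordLength S h ≤ finsetDiam S F + 1 := by
  have hdiam : ∀ g ∈ F, wordLength S g ≤ finsetDiam S F := by
    refine Nat.sInf_mem (s := {m | ∀ g ∈ F, wordLength S g ≤ m}) ?_
    exact ⟨F.sup (wordLength S), fun g hg => Finset.le_sup hg⟩
  obtain ⟨s, hs, hh⟩ := Finset.mem_biUnion.1 hh
  rcases Finset.mem_union.1 hh with h1 | h1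
  · obtain ⟨g, hg, rfl⟩ := Finset.mem_image.1 (Finset.mem_sdiff.1 h1).1
    have := wordLength_mul_le hS s g
    have := hdiam g hg
    have := wordLength_generator_le hs
    omega
  · exact (hdiam h (Finset.mem_sdiff.1 h1).1).trans (Nat.le_succ _)

lemma tendsto_boundary_div {G : Type*} [Group G] [DecidableEq G] {S : Finset G} {K : ℝ}
    {F : ℕ → Finset G} (hF : IsControlledFolnerSeq S K F) :
    Tendsto (fun n => ((finsetBoundary S (F n)).card : ℝ) / (F n).card) atTop (𝓝 0) := by
  have hlim := tendsto_finsetSum S fun s _ => hF.2.1 s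
  rw [Finset.sum_const_zero] at hlim
  refine squeeze_zero (fun n => by positivity) (fun n => ?_) hlim
  rw [← Finset.sum_div]
  gcongr
  exact_mod_cast Finset.card_biUnion_le

/-- If `b g / |g|` tends weakly to `0`, the displacements of the averages of `b` along a
controlled Følner sequence tend weakly to `0`. -/
lemma tendsto_inner_displacement {G H : Type*} [Group G] [DecidableEq G] {S : Finset G}
    (hS : IsSymmGen S) [NormedAddCommGroup H] [InnerProductSpace ℝ H]
    {π : G →* (H ≃ₗᵢ[ℝ] H)} {b : G → H} (hb : IsCocycle π b) {K : ℝ} (hK : 0 < K)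
    {F : ℕ → Finset G} (hF : IsControlledFolnerSeq S K F) {ζ : H}
    (hζ : Tendsto (fun g => (wordLength S g : ℝ)⁻¹ * ⟪b g, ζ⟫) cofinite (𝓝 0))
    {s : G} (hs : s ∈ S) :
    Tendsto (fun n => ⟪π s (((F n).card : ℝ)⁻¹ • ∑ h ∈ F n, b h) + b s
      - ((F n).card : ℝ)⁻¹ • ∑ h ∈ F n, b h, ζ⟫) atTop (𝓝 0) := by
  rw [Metric.tendsto_nhds]
  intro ε hε
  set δ := ε / (2 * K) with hδ
  have hδ0 : 0 < δ := by positivity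
  -- `|⟪b g, ζ⟫| ≤ δ |g| + C` for all `g`, the constant taking care of a finite set.
  obtain ⟨C, hC⟩ : ∃ C, ∀ g, |⟪b g, ζ⟫| ≤ δ * wordLength S g + C := by
    have hfin : {g : G | ¬ |⟪b g, ζ⟫| ≤ δ * wordLength S g}.Finite := by
      have h1 := (Metric.tendsto_nhds.1 hζ δ hδ0).and
        ((tendsto_wordLength hS).eventually_gt_atTop 0)
      refine h1.mono fun g hg => ?_
      obtain ⟨hg, hpos⟩ := hg
      rw [Real.dist_eq, sub_zero, abs_mul, abs_inv, abs_of_pos hpos,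
        inv_mul_lt_iff₀ hpos] at hg
      change |⟪b g, ζ⟫| ≤ δ * wordLength S g
      linarith
    obtain ⟨C, hC⟩ := (hfin.image fun g => |⟪b g, ζ⟫|).bddAbove
    refine ⟨max C 0, fun g => ?_⟩
    by_cases hg : |⟪b g, ζ⟫| ≤ δ * wordLength S g
    · linarith [le_max_right C 0]
    · have h1 : |⟪b g, ζ⟫| ≤ C := hC ⟨g, hg, rfl⟩
      have h2 : 0 ≤ δ * wordLength S g := by positivity
      linarith [le_max_left C 0]
  have hlim := (tendsto_boundary_div hF).const_mul (δ + C)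
  rw [mul_zero] at hlim
  filter_upwards [hlim.eventually_lt_const (half_pos hε)] with n hn
  rw [Real.dist_eq, sub_zero]
  refine (abs_inner_displacement_le hb (hF.1 n) hs ζ).trans_lt ?_
  set N : ℝ := ((finsetBoundary S (F n)).card : ℝ)
  set d : ℝ := (finsetDiam S (F n) : ℝ) with hd
  have hsum : ∑ h ∈ finsetBoundary S (F n), |⟪b h, ζ⟫| ≤ N * (δ * (d + 1) + C) := by
    rw [← nsmul_eq_mul]
    refine Finset.sum_le_card_nsmul _ _ _ fun h hh => (hC h).trans ?_
    have : (wordLength S h : ℝ) ≤ d + 1 := by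
      rw [hd]
      exact_mod_cast wordLength_le_of_mem_boundary hS hh
    gcongr
  -- If `d = 0` the left side vanishes.
  have hctrl : N / (F n).card * d ≤ K := by
    rcases (Nat.cast_nonneg (α := ℝ) (finsetDiam S (F n))).eq_or_lt with h0 | h0
    · rw [hd, ← h0, mul_zero]; exact hK.le
    · exact (le_div_iff₀ h0).1 (hF.2.2 n)
  calc (∑ h ∈ finsetBoundary S (F n), |⟪b h, ζ⟫|) / (F n).card
      ≤ N * (δ * (d + 1) + C) / (F n).card := by gcongr
    _ = δ * (N / (F n).card * d) + (δ + C) * (N / (F n).card) := by ring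
    _ ≤ δ * K + (δ + C) * (N / (F n).card) := by gcongr
    _ < δ * K + ε / 2 := by gcongr
    _ = ε := by rw [hδ]; field_simp; ring

/-! ### From weak to strong almost fixed points -/

/-- If the displacements of some sequence of points under all `T_s`, `s ∈ S`, tend weakly to `0`,
then some sequence has displacements tending to `0` in norm: the set of tuples
`(T_s ξ - ξ)_s` is convex, so its weak and norm closures agree. -/
lemma exists_norm_tendsto_of_weak {G H : Type*} [Group G] {S : Finset G}
    [NormedAddCommGroup H] [InnerProductSpace ℝ H] [CompleteSpace H]
    {π : G →* (H ≃ₗᵢ[ℝ] H)} {b : G → H} (x : ℕ → H)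
    (hx : ∀ s ∈ S, ∀ ζ : H, Tendsto (fun n => ⟪π s (x n) + b s - x n, ζ⟫) atTop (𝓝 0)) :
    ∃ ξ : ℕ → H, ∀ s ∈ S, Tendsto (fun n => ‖π s (ξ n) + b s - ξ n‖) atTop (𝓝 0) := by
  classical
  let Φ : H → (S → H) := fun ξ s => π s ξ + b s - ξ
  have hconv : Convex ℝ (Set.range Φ) := by
    rintro _ ⟨u, rfl⟩ _ ⟨v, rfl⟩ p q - - hpq
    refine ⟨p • u + q • v, ?_⟩
    funext s
    have hbs : b s = p • b s + q • b s := by rw [← add_smul, hpq, one_smul]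
    simp only [Φ, Pi.add_apply, Pi.smul_apply, map_add, map_smul, smul_add, smul_sub]
    nth_rewrite 1 [hbs]
    abel
  have hmem : (0 : S → H) ∈ closure (Set.range Φ) := by
    by_contra hnot
    obtain ⟨φ, u, hu, hsep⟩ :=
      geometric_hahn_banach_point_closed hconv.closure isClosed_closure hnot
    rw [map_zero] at hu
    have hφ : ∀ y : S → H, φ y = ∑ s, ⟪y s, (InnerProductSpace.toDual ℝ H).symm
        (φ.comp (ContinuousLinearMap.single ℝ (fun _ : S => H) s))⟫ := by
      intro y
      conv_lhs => rw [← Finset.univ_sum_single y]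
      rw [map_sum]
      refine Finset.sum_congr rfl fun s _ => ?_
      rw [real_inner_comm, InnerProductSpace.toDual_symm_apply]
      rfl
    have hlim : Tendsto (fun n => φ (Φ (x n))) atTop (𝓝 0) := by
      simp only [hφ]
      rw [← Finset.sum_const_zero (s := (Finset.univ : Finset S)) (M := ℝ)]
      exact tendsto_finsetSum _ fun s _ => hx s s.2 _
    have := ge_of_tendsto' hlim fun n => (hsep _ (subset_closure ⟨x n, rfl⟩)).le
    linarith
  obtain ⟨y, hy, hy0⟩ := mem_closure_iff_seq_limit.1 hmem
  choose ξ hξ using hy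
  refine ⟨ξ, fun s hs => ?_⟩
  have h1 := (tendsto_pi_nhds.1 hy0 ⟨s, hs⟩).norm
  simp only [Pi.zero_apply, norm_zero] at h1
  refine h1.congr fun n => ?_
  rw [← hξ n]

/-- The elements almost fixing a given sequence of points form a subgroup. -/
lemma tendsto_of_generators {G H : Type*} [Group G] {S : Finset G} (hS : IsSymmGen S)
    [NormedAddCommGroup H] [InnerProductSpace ℝ H]
    {π : G →* (H ≃ₗᵢ[ℝ] H)} {b : G → H} (hb : IsCocycle π b) {ξ : ℕ → H}
    (hξ : ∀ s ∈ S, Tendsto (fun n => ‖π s (ξ n) + b s - ξ n‖) atTop (𝓝 0)) (g : G) :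
    Tendsto (fun n => ‖π g (ξ n) + b g - ξ n‖) atTop (𝓝 0) := by
  have hb1 : b 1 = 0 := by simpa using hb 1 1
  have hg : g ∈ Subgroup.closure (S : Set G) := by rw [hS.2]; trivial
  induction hg using Subgroup.closure_induction with
  | mem x hx => exact hξ x hx
  | one => simp [hb1]
  | mul x y _ _ hx hy =>
    have hxy := hy.add hx
    rw [add_zero] at hxy
    refine squeeze_zero (fun _ => norm_nonneg _) (fun n => ?_) hxy
    have : π (x * y) (ξ n) + b (x * y) - ξ n
        = π x (π y (ξ n) + b y - ξ n) + (π x (ξ n) + b x - ξ n) := by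
      rw [hb x y, map_mul, LinearIsometryEquiv.coe_mul, Function.comp_apply, map_sub, map_add]
      abel
    rw [this]
    exact (norm_add_le _ _).trans (by rw [LinearIsometryEquiv.norm_map])
  | inv x _ hx =>
    refine hx.congr fun n => ?_
    have h1 : π x (b x⁻¹) + b x = 0 := by rw [← hb, mul_inv_cancel, hb1]
    have h2 : π x (π x⁻¹ (ξ n)) = ξ n := by
      rw [map_inv]
      exact (π x).apply_symm_apply _
    rw [← (π x).norm_map (π x⁻¹ (ξ n) + b x⁻¹ - ξ n), ← norm_neg, map_sub, map_add, h2,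
      eq_neg_of_add_eq_zero_left h1]
    congr 1
    abel

/-- **Almost innerness from `H¹` matrix coefficients, ergodic case.** Let `G` be a
one-ended finitely generated group admitting a controlled Følner sequence, `π` an ergodic
orthogonal representation, and `b` a 1-cocycle for `π` with
`g ↦ (1/|g|) ⟪b g, ξ⟫ ∈ H¹(G)` for every `ξ`. Then `b` is almost inner: the affine action
`T_g ξ = π g ξ + b g` admits almost fixed points. -/
theorem almost_inner_of_h1_ergodic {G H : Type*} [Group G] [Countable G] [DecidableEq G]
    (S : Finset G) (hS : IsSymmGen S) (hone : OneEnded S)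
    (hcf : ∃ K > (0 : ℝ), ∃ F : ℕ → Finset G, IsControlledFolnerSeq S K F)
    [NormedAddCommGroup H] [InnerProductSpace ℝ H] [CompleteSpace H]
    (π : G →* (H ≃ₗᵢ[ℝ] H)) (hπ : IsErgodicRep π)
    (b : G → H) (hb : IsCocycle π b)
    (hH1 : ∀ ξ : H, MemH1 S fun g => (wordLength S g : ℝ)⁻¹ * ⟪b g, ξ⟫) :
    ∃ ξ : ℕ → H, ∀ g : G, Tendsto (fun k => ‖π g (ξ k) + b g - ξ k‖) atTop (𝓝 0) := by
  obtain ⟨K, hK, F, hF⟩ := hcf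
  obtain ⟨ξ, hξ⟩ := exists_norm_tendsto_of_weak (S := S) (π := π) (b := b)
    (fun n => ((F n).card : ℝ)⁻¹ • ∑ h ∈ F n, b h) fun s hs ζ =>
      tendsto_inner_displacement hS hb hK hF
        (tendsto_inner_div_wordLength hS hone hπ hb hH1 ζ) hs
  exact ⟨ξ, tendsto_of_generators hS hb hξ⟩
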